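/- arXiv:2306.10427 — 7 statements merged into one kernel-verified Lean document; each statement's English description precedes it below -/
import Mathlib

section
/- Every embeddable finite simple graph contains no cycle of length 4 (it is square-free). In particular, if a graph G contains two distinct vertices u, v that have two distinct common neighbors a, b, then G is not embeddable. -/
open Matrix

/-- A 010-coloring of a graph: no two adjacent vertices are both 0,
and no triangle has all three vertices 1. -/
def Is010Coloring {V : Type*} (G : SimpleGraph V) (c : V → Fin 2) : Prop :=
  (∀ u v : V, G.Adj u v → ¬(c u = 0 ∧ c v = 0)) ∧
  (∀ u v w : V, G.Adj u v → G.Adj v w → G.Adj u w →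
    ¬(c u = 1 ∧ c v = 1 ∧ c w = 1))

/-- A graph is 010-colorable if it admits a 010-coloring. -/
def Is010Colorable {V : Type*} (G : SimpleGraph V) : Prop :=
  ∃ c : V → Fin 2, Is010Coloring G c

/-- An embedding of a graph into ℝ³: adjacent vertices map to orthogonal
vectors, and distinct vertices map to non-collinear vectors. -/
def IsEmbedding {V : Type*} (G : SimpleGraph V) (p : V → Fin 3 → ℝ) : Prop :=
  (∀ u v : V, G.Adj u v → p u ⬝ᵥ p v = 0) ∧
  (∀ u v : V, u ≠ v → crossProduct (p u) (p v) ≠ 0)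

/-- A graph is embeddable if it admits an embedding into ℝ³. -/
def Embeddable {V : Type*} (G : SimpleGraph V) : Prop :=
  ∃ p : V → Fin 3 → ℝ, IsEmbedding G p

theorem cross_zero_aux (u v a b : Fin 3 → ℝ) (hw : crossProduct u v ≠ 0)
    (hua : u ⬝ᵥ a = 0) (hub : u ⬝ᵥ b = 0) (hva : v ⬝ᵥ a = 0) (hvb : v ⬝ᵥ b = 0) :
    crossProduct a b = 0 := by
  have key : ∀ c : Fin 3 → ℝ, u ⬝ᵥ c = 0 → v ⬝ᵥ c = 0 →
      ∀ i j, crossProduct u v i * c j = crossProduct u v j * c i := by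
    intro c h1 h2 i j
    simp only [dotProduct, Fin.sum_univ_three] at h1 h2
    fin_cases i <;> fin_cases j <;> simp [cross_apply]
    · linear_combination v 2 * h1 - u 2 * h2
    · linear_combination u 1 * h2 - v 1 * h1
    · linear_combination u 2 * h2 - v 2 * h1
    · linear_combination v 0 * h1 - u 0 * h2
    · linear_combination v 1 * h1 - u 1 * h2
    · linear_combination u 0 * h2 - v 0 * h1
  have ka := key a hua hva
  have kb := key b hub hvb
  obtain ⟨k, hk⟩ := Function.ne_iff.mp hw
  have hk' : crossProduct u v k ≠ 0 := hk
  have hm : ∀ i j, a i * b j - a j * b i = 0 := by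
    intro i j
    apply (mul_eq_zero.mp _).resolve_left hk'
    linear_combination b j * ka k i - b i * ka k j + a k * kb i j
  rw [cross_apply]
  ext i
  fin_cases i
  · exact hm 1 2
  · exact hm 2 0
  · exact hm 0 1

/-- Every embeddable graph is square-free: if `G` contains two distinct
vertices `u`, `v` with two distinct common neighbors `a`, `b` (i.e. a cycle
of length 4), then `G` is not embeddable. -/
theorem embeddable_square_free {V : Type*} [Fintype V] (G : SimpleGraph V)
    (u v a b : V) (huv : u ≠ v) (hab : a ≠ b)
    (hua : G.Adj u a) (hub : G.Adj u b) (hva : G.Adj v a) (hvb : G.Adj v b) :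
    ¬ Embeddable G := by
  rintro ⟨p, ho, hc⟩
  exact hc a b hab (cross_zero_aux (p u) (p v) (p a) (p b) (hc u v huv)
    (ho _ _ hua) (ho _ _ hub) (ho _ _ hva) (ho _ _ hvb))
end

section
/- Let G be a finite simple graph and v a vertex of G of degree at most 2. If the graph G − v obtained by deleting v is 010-colorable, then G is 010-colorable. -/
open Matrix

/-- If a vertex `v` of a finite graph `G` has degree at most 2 and the graph
`G - v` obtained by deleting `v` is 010-colorable, then `G` is 010-colorable. -/
theorem colorable010_of_delete_low_degree_vertex {V : Type*} [Fintype V]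
    [DecidableEq V] (G : SimpleGraph V) [DecidableRel G.Adj] (v : V)
    (hdeg : G.degree v ≤ 2)
    (hcol : Is010Colorable (G.induce {u : V | u ≠ v})) :
    Is010Colorable G := by
  classical
  obtain ⟨c, h0, h1⟩ := hcol
  -- extend the colouring of `G - v` arbitrarily at `v`
  obtain ⟨d, hd⟩ : ∃ d : V → Fin 2, ∀ u (h : u ≠ v), d u = c ⟨u, h⟩ :=
    ⟨fun u => if h : u ≠ v then c ⟨u, h⟩ else 0, fun u h => by simp [h]⟩
  have d0 : ∀ a b, a ≠ v → b ≠ v → G.Adj a b → ¬(d a = 0 ∧ d b = 0) := by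
    intro a b ha hb hab
    rw [hd a ha, hd b hb]
    exact h0 ⟨a, ha⟩ ⟨b, hb⟩ hab
  have d1 : ∀ a b e, a ≠ v → b ≠ v → e ≠ v → G.Adj a b → G.Adj b e → G.Adj a e →
      ¬(d a = 1 ∧ d b = 1 ∧ d e = 1) := by
    intro a b e ha hb he hab hbe hae
    rw [hd a ha, hd b hb, hd e he]
    exact h1 ⟨a, ha⟩ ⟨b, hb⟩ ⟨e, he⟩ hab hbe hae
  by_cases hz : ∃ z, G.Adj v z ∧ d z = 0
  · -- some neighbour is 0: colour `v` with 1
    obtain ⟨z, hvz, hz0⟩ := hz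
    have key : ∀ a b, G.Adj v a → G.Adj v b → G.Adj a b → ¬(d a = 1 ∧ d b = 1) := by
      rintro a b hva hvb hab ⟨ha, hb⟩
      have hza : z ≠ a := by rintro rfl; simp [hz0] at ha
      have hzb : z ≠ b := by rintro rfl; simp [hz0] at hb
      have hsub : ({z, a, b} : Finset V) ⊆ G.neighborFinset v := by
        intro x hx
        simp only [Finset.mem_insert, Finset.mem_singleton] at hx
        rw [SimpleGraph.mem_neighborFinset]
        rcases hx with rfl | rfl | rfl <;> assumption
      have hle := Finset.card_le_card hsub
      rw [Finset.card_eq_three.mpr ⟨z, a, b, hza, hzb, hab.ne, rfl⟩,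
        SimpleGraph.card_neighborFinset_eq_degree] at hle
      omega
    refine ⟨fun u => if u = v then 1 else d u, ?_, ?_⟩
    · intro a b hab
      by_cases ha : a = v <;> by_cases hb : b = v <;> simp only [ha, hb, if_true, if_false]
      · simp
      · simp
      · simp
      · exact d0 a b ha hb hab
    · intro a b e hab hbe hae
      by_cases ha : a = v
      · subst ha
        have hb := hab.ne'
        have he := hae.ne'
        simp only [hb, he, if_true, if_false]
        exact fun h => key b e hab hae hbe h.2
      by_cases hb : b = v
      · subst hb
        have he := hbe.ne'
        simp only [ha, he, if_true, if_false]
        exact fun h => key a e hab.symm hbe hae ⟨h.1, h.2.2⟩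
      by_cases he : e = v
      · subst he
        simp only [ha, hb, if_true, if_false]
        exact fun h => key a b hae.symm hbe.symm hab ⟨h.1, h.2.1⟩
      simp only [ha, hb, he, if_false]
      exact d1 a b e ha hb he hab hbe hae
  · -- all neighbours are 1: colour `v` with 0
    push Not at hz
    refine ⟨fun u => if u = v then 0 else d u, ?_, ?_⟩
    · intro a b hab
      by_cases ha : a = v
      · subst ha
        have hb := hab.ne'
        simp only [hb, if_true, if_false]
        exact fun h => hz b hab h.2
      by_cases hb : b = v
      · subst hb
        simp only [ha, if_true, if_false]
        exact fun h => hz a hab.symm h.1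
      simp only [ha, hb, if_false]
      exact d0 a b ha hb hab
    · intro a b e hab hbe hae
      by_cases ha : a = v
      · simp [ha]
      by_cases hb : b = v
      · simp [hb]
      by_cases he : e = v
      · simp [he]
      simp only [ha, hb, he, if_false]
      exact d1 a b e ha hb he hab hbe hae
end

section
/- Every Kochen-Specker graph of minimum order has minimum degree at least 3; that is, if G is a KS graph such that no KS graph has fewer vertices than G, then every vertex of G has degree at least 3. -/
open Matrix

/-- A Kochen-Specker graph: embeddable and not 010-colorable. -/
def IsKSGraph {V : Type*} (G : SimpleGraph V) : Prop :=
  Embeddable G ∧ ¬ Is010Colorable G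

/-- Every Kochen-Specker graph of minimum order has minimum degree at least 3. -/
theorem ks_min_order_min_degree_three {V : Type} [Fintype V]
    (G : SimpleGraph V) [DecidableRel G.Adj] (hKS : IsKSGraph G)
    (hmin : ∀ (W : Type) [Fintype W] (H : SimpleGraph W),
      IsKSGraph H → Fintype.card V ≤ Fintype.card W) :
    ∀ v : V, 3 ≤ G.degree v := by
  classical
  intro v
  by_contra hdeg
  obtain ⟨⟨p, hp1, hp2⟩, hnc⟩ := hKS
  -- the graph with `v` deleted
  let H : SimpleGraph {x : V // x ≠ v} := G.comap Subtype.val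
  have hcard : Fintype.card {x : V // x ≠ v} < Fintype.card V :=
    Fintype.card_subtype_lt (x := v) (by simp)
  have hcol : Is010Colorable H := by
    by_contra hH
    have := hmin _ H ⟨⟨fun x => p x.1, fun a b h => hp1 _ _ h,
      fun a b h => hp2 _ _ (fun e => h (Subtype.ext e))⟩, hH⟩
    omega
  obtain ⟨c, hc1, hc2⟩ := hcol
  -- the vertex `v` gets 0 exactly when no neighbor has color 0
  let P : Prop := ∃ x : {x : V // x ≠ v}, G.Adj v x.1 ∧ c x = 0
  let d : V → Fin 2 := fun x => if h : x ≠ v then c ⟨x, h⟩ else if P then 1 else 0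
  have hd : ∀ x (h : x ≠ v), d x = c ⟨x, h⟩ := fun x h => by simp [d, h]
  have hdv : d v = if P then 1 else 0 := by simp [d]
  have edge : ∀ u, G.Adj v u → ¬ (d v = 0 ∧ d u = 0) := by
    rintro u huv ⟨h1, h2⟩
    have hu : u ≠ v := huv.ne'
    rw [hd u hu] at h2
    have hP : P := ⟨⟨u, hu⟩, huv, h2⟩
    simp [hdv, hP] at h1
  have tri : ∀ u w, G.Adj v u → G.Adj v w → G.Adj u w →
      ¬ (d v = 1 ∧ d u = 1 ∧ d w = 1) := by
    rintro u w hu hw huw ⟨h1, h2, h3⟩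
    have hP : P := by
      by_contra hP
      simp [hdv, hP] at h1
    obtain ⟨x, hx, hx0⟩ := hP
    have hdx : d x.1 = 0 := by rw [hd x.1 x.2]; exact hx0
    have hxu : x.1 ≠ u := by
      intro e
      rw [e, h2] at hdx
      exact absurd hdx (by decide)
    have hxw : x.1 ≠ w := by
      intro e
      rw [e, h3] at hdx
      exact absurd hdx (by decide)
    apply hdeg
    rw [← G.card_neighborFinset_eq_degree v,
      ← Finset.card_eq_three.mpr ⟨x.1, u, w, hxu, hxw, huw.ne, rfl⟩]
    apply Finset.card_le_card
    intro y hy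
    simp only [Finset.mem_insert, Finset.mem_singleton] at hy
    rw [SimpleGraph.mem_neighborFinset]
    rcases hy with rfl | rfl | rfl <;> assumption
  apply hnc
  refine ⟨d, ?_, ?_⟩
  · intro a b hab hh
    by_cases ha : a = v
    · subst ha
      exact edge b hab hh
    by_cases hb : b = v
    · subst hb
      exact edge a hab.symm hh.symm
    rw [hd a ha, hd b hb] at hh
    exact hc1 ⟨a, ha⟩ ⟨b, hb⟩ hab hh
  · rintro a b e hab hbe hae ⟨h1, h2, h3⟩
    by_cases ha : a = v
    · subst ha
      exact tri b e hab hae hbe ⟨h1, h2, h3⟩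
    by_cases hb : b = v
    · subst hb
      exact tri a e hab.symm hbe hae ⟨h2, h1, h3⟩
    by_cases he : e = v
    · subst he
      exact tri a b hae.symm hbe.symm hab ⟨h3, h1, h2⟩
    rw [hd a ha] at h1
    rw [hd b hb] at h2
    rw [hd e he] at h3
    exact hc2 ⟨a, ha⟩ ⟨b, hb⟩ ⟨e, he⟩ hab hbe hae ⟨h1, h2, h3⟩
end

section
/- In every Kochen-Specker graph of minimum order, each vertex lies on a triangle; that is, if G is a KS graph such that no KS graph has fewer vertices than G, then every vertex of G has two adjacent neighbors. -/
open Matrix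

/-- In every Kochen-Specker graph of minimum order, each vertex lies on a
triangle, i.e. has two adjacent neighbors. -/
theorem ks_min_order_vertex_on_triangle {V : Type} [Fintype V]
    (G : SimpleGraph V) (hKS : IsKSGraph G)
    (hmin : ∀ (W : Type) [Fintype W] (H : SimpleGraph W),
      IsKSGraph H → Fintype.card V ≤ Fintype.card W) :
    ∀ v : V, ∃ u w : V, G.Adj v u ∧ G.Adj v w ∧ G.Adj u w := by
  classical
  intro v
  by_contra hno
  obtain ⟨⟨p, hp1, hp2⟩, hnc⟩ := hKS
  -- delete `v`; the smaller graph is embeddable, hence colorable by minimality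
  let H : SimpleGraph {x : V // x ≠ v} := G.comap Subtype.val
  have hE : Embeddable H :=
    ⟨fun x => p x.1, fun a b hab => hp1 _ _ hab,
      fun a b hab => hp2 _ _ (fun h => hab (Subtype.ext h))⟩
  have hcol : Is010Colorable H := by
    by_contra hH
    have h1 := hmin _ H ⟨hE, hH⟩
    have h2 : Fintype.card {x : V // x ≠ v} < Fintype.card V :=
      Fintype.card_subtype_lt (x := v) (by simp)
    omega
  obtain ⟨c, hc1, hc2⟩ := hcol
  -- color `v` with 1
  apply hnc
  refine ⟨fun x => if h : x = v then 1 else c ⟨x, h⟩, ?_, ?_⟩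
  · rintro a b hab ⟨ha, hb⟩
    by_cases hav : a = v
    · simp [hav] at ha
    by_cases hbv : b = v
    · simp [hbv] at hb
    simp only [hav, hbv, dite_false] at ha hb
    exact hc1 ⟨a, hav⟩ ⟨b, hbv⟩ hab ⟨ha, hb⟩
  · rintro a b d hab hbd had ⟨ha, hb, hd⟩
    by_cases hav : a = v
    · subst hav
      exact hno ⟨b, d, hab, had, hbd⟩
    by_cases hbv : b = v
    · subst hbv
      exact hno ⟨a, d, hab.symm, hbd, had⟩
    by_cases hdv : d = v
    · subst hdv
      exact hno ⟨a, b, had.symm, hbd.symm, hab⟩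
    simp only [hav, hbv, hdv, dite_false] at ha hb hd
    exact hc2 ⟨a, hav⟩ ⟨b, hbv⟩ ⟨d, hdv⟩ hab hbd had ⟨ha, hb, hd⟩
end

section
/- Every Kochen-Specker graph of minimum order is properly 4-colorable; that is, if G is a KS graph such that no KS graph has fewer vertices than G, then there is a map c : V(G) → {1,2,3,4} with c(u) ≠ c(v) for every edge uv of G. -/
open Matrix

/-- Colour of a sign pattern, read up to a global sign: the four pairs of opposite
octants, with a suitable choice for the patterns that contain a zero. -/
def octantColor (a b c : SignType) : Fin 4 :=
  match a, b, c with
  | 1, 1, 1 | -1, -1, -1 => 0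
  | 1, 1, -1 | -1, -1, 1 => 1
  | 1, -1, 1 | -1, 1, -1 => 2
  | 1, -1, -1 | -1, 1, 1 => 3
  | 0, 1, 1 | 0, -1, -1 => 3
  | 0, 1, -1 | 0, -1, 1 => 1
  | 1, 0, 1 | -1, 0, -1 => 0
  | 1, 0, -1 | -1, 0, 1 => 1
  | 1, 1, 0 | -1, -1, 0 => 0
  | 1, -1, 0 | -1, 1, 0 => 3
  | 0, 1, 0 | 0, -1, 0 => 3
  | 0, 0, 1 | 0, 0, -1 => 2
  | _, 0, 0 => 0

theorem octantColor_spec : ∀ a b c x y z : SignType,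
    ¬ (a = 0 ∧ b = 0 ∧ c = 0) → ¬ (x = 0 ∧ y = 0 ∧ z = 0) →
    octantColor a b c = octantColor x y z →
    (0 ≤ a * x ∧ 0 ≤ b * y ∧ 0 ≤ c * z ∨ a * x ≤ 0 ∧ b * y ≤ 0 ∧ c * z ≤ 0) ∧
      ¬ (a * x = 0 ∧ b * y = 0 ∧ c * z = 0) := by
  decide

theorem octantColor_ne (p q : Fin 3 → ℝ) (hp : p ≠ 0) (hq : q ≠ 0) (h : p ⬝ᵥ q = 0) :
    octantColor (SignType.sign (p 0)) (SignType.sign (p 1)) (SignType.sign (p 2)) ≠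
      octantColor (SignType.sign (q 0)) (SignType.sign (q 1)) (SignType.sign (q 2)) := by
  intro he
  have nz : ∀ r : Fin 3 → ℝ, r ≠ 0 → ¬ (SignType.sign (r 0) = 0 ∧ SignType.sign (r 1) = 0 ∧
      SignType.sign (r 2) = 0) := by
    rintro r hr ⟨h0, h1, h2⟩
    apply hr
    rw [sign_eq_zero_iff] at h0 h1 h2
    ext i
    fin_cases i <;> simpa
  obtain ⟨h1, h2⟩ := octantColor_spec _ _ _ _ _ _ (nz p hp) (nz q hq) he
  simp only [← sign_mul, sign_nonneg_iff, sign_nonpos_iff, sign_eq_zero_iff] at h1 h2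
  have hs : p 0 * q 0 + p 1 * q 1 + p 2 * q 2 = 0 := by
    simpa [dotProduct, Fin.sum_univ_three] using h
  apply h2
  rcases h1 with ⟨h3, h4, h5⟩ | ⟨h3, h4, h5⟩ <;> refine ⟨?_, ?_, ?_⟩ <;> linarith

/-- Every Kochen-Specker graph of minimum order is properly 4-colorable. -/
theorem ks_min_order_four_colorable {V : Type} [Fintype V]
    (G : SimpleGraph V) (hKS : IsKSGraph G)
    (hmin : ∀ (W : Type) [Fintype W] (H : SimpleGraph W),
      IsKSGraph H → Fintype.card V ≤ Fintype.card W) :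
    ∃ c : V → Fin 4, ∀ u v : V, G.Adj u v → c u ≠ c v := by
  obtain ⟨⟨p, horth, hcross⟩, -⟩ := hKS
  refine ⟨fun v => octantColor (SignType.sign (p v 0)) (SignType.sign (p v 1))
    (SignType.sign (p v 2)), fun u v huv => ?_⟩
  have hc := hcross u v huv.ne
  refine octantColor_ne _ _ ?_ ?_ (horth u v huv)
  · intro h0
    exact hc (by simp [h0])
  · intro h0
    exact hc (by simp [h0])
end

section
/- Let G be a finite simple graph, (S, w) a cross-product cover of G, and v₁v₂ an edge of G with v₁, v₂ ∈ S. Then G is embeddable if and only if there exists a function p : V(G) → ℝ³ satisfying all of: (1) p(v₁) = (1,0,0) and p(v₂) = (0,1,0); (2) p(u) × p(v) ≠ 0 for all distinct u, v ∈ V(G); (3) p(v) = p(w_v¹) × p(w_v²) for every v ∈ V(G) \ S, where w_v = {w_v¹, w_v²}; (4) the inner product of p(u) and p(v) is 0 for every edge uv of G. -/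
open Matrix

lemma coll_aux (a z : Fin 3 → ℝ) (h : crossProduct a z = 0) (ha : a ≠ 0) (hz : z ≠ 0) :
    ∃ m : ℝ, m ≠ 0 ∧ z = m • a := by
  have haa : a ⬝ᵥ a ≠ 0 := fun h => ha (dotProduct_self_eq_zero.1 h)
  have e0 := congrFun h 0
  have e1 := congrFun h 1
  have e2 := congrFun h 2
  simp [cross_apply] at e0 e1 e2
  have key : (a ⬝ᵥ a) • z = (a ⬝ᵥ z) • a := by
    ext i
    fin_cases i <;> simp [dotProduct, Fin.sum_univ_three]
    · linear_combination (-a 1) * e2 + a 2 * e1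
    · linear_combination (a 0) * e2 - a 2 * e0
    · linear_combination (-a 0) * e1 + a 1 * e0
  have hk : z = ((a ⬝ᵥ a)⁻¹ * (a ⬝ᵥ z)) • a := by
    rw [mul_smul, ← key, smul_smul, inv_mul_cancel₀ haa, one_smul]
  refine ⟨_, ?_, hk⟩
  intro h0
  rw [h0, zero_smul] at hk
  exact hz hk

lemma cross_aux (a x y : Fin 3 → ℝ) (ha : a ≠ 0) (hx : a ⬝ᵥ x = 0) (hy : a ⬝ᵥ y = 0)
    (hxy : crossProduct x y ≠ 0) : ∃ m : ℝ, m ≠ 0 ∧ crossProduct x y = m • a := by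
  refine coll_aux a _ ?_ ha hxy
  simp only [dotProduct, Fin.sum_univ_three] at hx hy
  ext i
  fin_cases i <;> simp [cross_apply]
  · linear_combination x 0 * hy - y 0 * hx
  · linear_combination x 1 * hy - y 1 * hx
  · linear_combination x 2 * hy - y 2 * hx

/-- Rotating two orthogonal nonzero vectors onto the first two axes. -/
lemma rot_aux (a b : Fin 3 → ℝ) (ha : a ≠ 0) (hb : b ≠ 0) (hab : a ⬝ᵥ b = 0) :
    ∃ f : (Fin 3 → ℝ) → (Fin 3 → ℝ), (∀ x y, f x ⬝ᵥ f y = x ⬝ᵥ y) ∧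
      (∃ s : ℝ, s ≠ 0 ∧ s • f a = ![1, 0, 0]) ∧ (∃ t : ℝ, t ≠ 0 ∧ t • f b = ![0, 1, 0]) := by
  have hA : 0 < a ⬝ᵥ a := lt_of_le_of_ne (by simp [dotProduct, Fin.sum_univ_three]; nlinarith [sq_nonneg (a 0), sq_nonneg (a 1), sq_nonneg (a 2)])
    (fun h => ha (dotProduct_self_eq_zero.1 h.symm))
  have hB : 0 < b ⬝ᵥ b := lt_of_le_of_ne (by simp [dotProduct, Fin.sum_univ_three]; nlinarith [sq_nonneg (b 0), sq_nonneg (b 1), sq_nonneg (b 2)])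
    (fun h => hb (dotProduct_self_eq_zero.1 h.symm))
  obtain ⟨s, hs0, hs⟩ : ∃ s : ℝ, s ≠ 0 ∧ s * s * (a ⬝ᵥ a) = 1 := by
    refine ⟨(√(a ⬝ᵥ a))⁻¹, by positivity, ?_⟩
    rw [← mul_inv, Real.mul_self_sqrt hA.le, inv_mul_cancel₀ hA.ne']
  obtain ⟨t, ht0, ht⟩ : ∃ s : ℝ, s ≠ 0 ∧ s * s * (b ⬝ᵥ b) = 1 := by
    refine ⟨(√(b ⬝ᵥ b))⁻¹, by positivity, ?_⟩
    rw [← mul_inv, Real.mul_self_sqrt hB.le, inv_mul_cancel₀ hB.ne']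
  let M : Matrix (Fin 3) (Fin 3) ℝ := ![s • a, t • b, (s * t) • crossProduct a b]
  have hcc : (s * t * (s * t)) * (crossProduct a b ⬝ᵥ crossProduct a b) = 1 := by
    rw [cross_dot_cross, dotProduct_comm b a, hab]
    linear_combination (t * t * (b ⬝ᵥ b)) * hs + ht
  have hba : b ⬝ᵥ a = 0 := by rw [dotProduct_comm, hab]
  have hac : a ⬝ᵥ crossProduct a b = 0 := dot_self_cross a b
  have hbc : b ⬝ᵥ crossProduct a b = 0 := dot_cross_self a b
  have hca : crossProduct a b ⬝ᵥ a = 0 := by rw [dotProduct_comm, hac]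
  have hcb : crossProduct a b ⬝ᵥ b = 0 := by rw [dotProduct_comm, hbc]
  have hM : M * Mᵀ = 1 := by
    ext i j
    change M i ⬝ᵥ M j = _
    fin_cases i <;> fin_cases j <;>
      simp [M, hab, hba, hac, hbc, hca, hcb] <;> first | linear_combination hs | linear_combination ht | linear_combination hcc
  have hM' : Mᵀ * M = 1 := mul_eq_one_comm.1 hM
  refine ⟨fun x => M *ᵥ x, ?_, ⟨s, hs0, ?_⟩, ⟨t, ht0, ?_⟩⟩
  · intro x y
    simp only
    rw [dotProduct_mulVec, ← mulVec_transpose, mulVec_mulVec, hM', one_mulVec]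
  · ext i
    change s * (M i ⬝ᵥ a) = _
    fin_cases i <;> simp [M, hba, hca]
    linear_combination hs
  · ext i
    change t * (M i ⬝ᵥ b) = _
    fin_cases i <;> simp [M, hab, hcb]
    linear_combination ht

/-- Observation 1: given a cross-product cover `(S, w)` of `G` (here the pair
`w_v = {w₁ v, w₂ v}` consists of two distinct neighbors of `v`, and the
transitive closure of the dependency relation is antisymmetric) and an edge
`v₁v₂` between free vertices, `G` is embeddable iff there is `p : V → ℝ³`
with (1) `p v₁ = (1,0,0)`, `p v₂ = (0,1,0)`; (2) no two distinct vertices get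
collinear vectors; (3) each bound vertex gets the cross product of the
vectors of its two cover neighbors; (4) adjacent vertices get orthogonal
vectors. -/
theorem embeddable_iff_cross_product_cover {V : Type*} [Fintype V]
    (G : SimpleGraph V) (S : Set V) (w₁ w₂ : V → V)
    (hw₁ : ∀ v ∉ S, G.Adj v (w₁ v)) (hw₂ : ∀ v ∉ S, G.Adj v (w₂ v))
    (hwne : ∀ v ∉ S, w₁ v ≠ w₂ v)
    (hanti : ∀ a b : V,
      Relation.TransGen (fun u v => v ∉ S ∧ (u = w₁ v ∨ u = w₂ v)) a b →
      Relation.TransGen (fun u v => v ∉ S ∧ (u = w₁ v ∨ u = w₂ v)) b a →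
      a = b)
    (v₁ v₂ : V) (hadj : G.Adj v₁ v₂) (hv₁ : v₁ ∈ S) (hv₂ : v₂ ∈ S) :
    Embeddable G ↔
      ∃ p : V → Fin 3 → ℝ,
        (p v₁ = ![1, 0, 0] ∧ p v₂ = ![0, 1, 0]) ∧
        (∀ u v : V, u ≠ v → crossProduct (p u) (p v) ≠ 0) ∧
        (∀ v ∉ S, p v = crossProduct (p (w₁ v)) (p (w₂ v))) ∧
        (∀ u v : V, G.Adj u v → p u ⬝ᵥ p v = 0) := by
  classical
  constructor
  swap
  · rintro ⟨p, -, h2, -, h4⟩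
    exact ⟨p, h4, h2⟩
  rintro ⟨p, hp, hc⟩
  have hne : v₁ ≠ v₂ := hadj.ne
  have ha : p v₁ ≠ 0 := fun h => hc _ _ hne (by rw [h]; simp)
  have hb : p v₂ ≠ 0 := fun h => hc _ _ hne (by rw [h]; simp)
  obtain ⟨f, hf, ⟨s, hs0, hs⟩, ⟨t, ht0, ht⟩⟩ := rot_aux _ _ ha hb (hp _ _ hadj)
  have hq : ∀ u v : V, G.Adj u v → f (p u) ⬝ᵥ f (p v) = 0 := fun u v h => by
    rw [hf, hp u v h]
  have hqc : ∀ u v : V, u ≠ v → crossProduct (f (p u)) (f (p v)) ≠ 0 := by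
    intro u v h h0
    apply hc u v h
    rw [← dotProduct_self_eq_zero, cross_dot_cross]
    rw [← dotProduct_self_eq_zero, cross_dot_cross] at h0
    simpa only [hf] using h0
  have hμ : ∀ v, ∃ m : ℝ, m ≠ 0 ∧
      (v ∉ S → crossProduct (f (p (w₁ v))) (f (p (w₂ v))) = m • f (p v)) := by
    intro v
    by_cases hv : v ∈ S
    · exact ⟨1, one_ne_zero, fun h => absurd hv h⟩
    obtain ⟨m, hm, h⟩ := cross_aux (f (p v)) _ _
      (fun h => hqc _ _ (hw₁ v hv).ne (by rw [h]; simp))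
      (hq _ _ (hw₁ v hv)) (hq _ _ (hw₂ v hv)) (hqc _ _ (hwne v hv))
    exact ⟨m, hm, fun _ => h⟩
  choose μ hμ0 hμ using hμ
  set R : V → V → Prop := fun u v => v ∉ S ∧ (u = w₁ v ∨ u = w₂ v) with hR
  have hRne : ∀ u v, R u v → u ≠ v := by
    rintro u v ⟨hv, rfl | rfl⟩
    · exact (hw₁ v hv).ne'
    · exact (hw₂ v hv).ne'
  have hirr : ∀ a, ¬ Relation.TransGen R a a := by
    intro a h
    obtain ⟨b, hab, hba⟩ := Relation.TransGen.head'_iff.1 h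
    rcases Relation.reflTransGen_iff_eq_or_transGen.1 hba with e | hba
    · exact hRne _ _ hab e
    · exact hRne _ _ hab (hanti a b (.single hab) hba)
  have hwf : WellFounded R := by
    haveI : Std.Irrefl (Relation.TransGen R) := ⟨hirr⟩
    exact Subrelation.wf (fun h => Relation.TransGen.single h)
      (Finite.wellFounded_of_trans_of_irrefl (Relation.TransGen R))
  obtain ⟨l, hl⟩ : ∃ l : V → ℝ, ∀ v, l v =
      if v ∈ S then (if v = v₁ then s else if v = v₂ then t else 1)
      else l (w₁ v) * l (w₂ v) * μ v := by
    refine ⟨hwf.fix (fun v ih => if h : v ∈ S then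
      (if v = v₁ then s else if v = v₂ then t else 1)
      else ih (w₁ v) ⟨h, .inl rfl⟩ * ih (w₂ v) ⟨h, .inr rfl⟩ * μ v), fun v => ?_⟩
    rw [hwf.fix_eq]
    split_ifs <;> rfl
  have hl0 : ∀ v, l v ≠ 0 := by
    intro v
    induction v using hwf.induction with
    | _ v ih =>
      rw [hl]
      split_ifs with h1 h2 h3
      · exact hs0
      · exact ht0
      · exact one_ne_zero
      · exact mul_ne_zero (mul_ne_zero (ih _ ⟨h1, .inl rfl⟩) (ih _ ⟨h1, .inr rfl⟩)) (hμ0 v)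
  refine ⟨fun v => l v • f (p v), ⟨?_, ?_⟩, ?_, ?_, ?_⟩
  · simp only
    rw [hl, if_pos hv₁, if_pos rfl, hs]
  · simp only
    rw [hl, if_pos hv₂, if_neg hne.symm, if_pos rfl, ht]
  · intro u v h
    simp only [map_smul, LinearMap.smul_apply]
    exact smul_ne_zero (hl0 _) (smul_ne_zero (hl0 _) (hqc u v h))
  · intro v hv
    simp only [map_smul, LinearMap.smul_apply]
    rw [hμ v hv, hl v, if_neg hv, smul_smul, smul_smul]
    congr 1
    ring
  · intro u v h
    simp [hq u v h]
end

section
/- There exists a Kochen-Specker graph with exactly 31 vertices; that is, there is a finite simple graph on 31 vertices that is embeddable and not 010-colorable. -/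
open Matrix

/-- The 31 integer rays of the Conway–Kochen type configuration. -/
def ksVec : Fin 31 → Fin 3 → ℤ :=
  ![![0, 0, 1],
    ![0, 1, -2],
    ![0, 1, -1],
    ![0, 1, 0],
    ![0, 1, 1],
    ![0, 1, 2],
    ![0, 2, -1],
    ![0, 2, 1],
    ![1, -2, -1],
    ![1, -2, 0],
    ![1, -2, 1],
    ![1, -1, -2],
    ![1, -1, -1],
    ![1, -1, 0],
    ![1, -1, 1],
    ![1, -1, 2],
    ![1, 0, -2],
    ![1, 0, -1],
    ![1, 0, 0],
    ![1, 0, 1],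
    ![1, 0, 2],
    ![1, 1, -2],
    ![1, 1, -1],
    ![1, 1, 0],
    ![1, 1, 1],
    ![1, 1, 2],
    ![2, 0, -1],
    ![2, 0, 1],
    ![2, 1, -1],
    ![2, 1, 0],
    ![2, 1, 1]]

/-- Integer dot product of two of the rays. -/
def ksDot (u v : Fin 31) : ℤ :=
  ksVec u 0 * ksVec v 0 + ksVec u 1 * ksVec v 1 + ksVec u 2 * ksVec v 2

/-- The orthogonality graph of the rays. -/
def ksGraph : SimpleGraph (Fin 31) where
  Adj u v := u ≠ v ∧ ksDot u v = 0
  symm := ⟨by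
    intro u v h
    refine ⟨h.1.symm, ?_⟩
    have h2 := h.2
    unfold ksDot at *
    linarith⟩
  loopless := ⟨fun u h => h.1 rfl⟩

instance ksGraphDec : DecidableRel ksGraph.Adj := fun u v =>
  inferInstanceAs (Decidable (u ≠ v ∧ ksDot u v = 0))

set_option maxRecDepth 100000 in
theorem ks_noncollinear : ∀ u v : Fin 31, u ≠ v →
    ¬ (ksVec u 1 * ksVec v 2 - ksVec u 2 * ksVec v 1 = 0 ∧
      ksVec u 2 * ksVec v 0 - ksVec u 0 * ksVec v 2 = 0 ∧
      ksVec u 0 * ksVec v 1 - ksVec u 1 * ksVec v 0 = 0) := by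
  decide +kernel

theorem ks_embeddable : Embeddable ksGraph := by
  refine ⟨fun u i => (ksVec u i : ℝ), ?_, ?_⟩
  · intro u v h
    have h2 : ksDot u v = 0 := h.2
    unfold ksDot at h2
    simp only [dotProduct, Fin.sum_univ_three]
    exact_mod_cast h2
  · intro u v huv h
    apply ks_noncollinear u v huv
    rw [cross_apply] at h
    have h0 := congrFun h 0
    have h1 := congrFun h 1
    have h2 := congrFun h 2
    simp only [Matrix.cons_val, Pi.zero_apply] at h0 h1 h2
    refine ⟨?_, ?_, ?_⟩
    · exact_mod_cast h0
    · exact_mod_cast h1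
    · exact_mod_cast h2

theorem ks_refute (z : Fin 31 → Prop)
    (E : ∀ u v, ksGraph.Adj u v → z u → z v → False)
    (T : ∀ u v w, ksGraph.Adj u v → ksGraph.Adj v w → ksGraph.Adj u w →
      z u ∨ z v ∨ z w) : False := by
  rcases T 0 9 29 (by decide) (by decide) (by decide) with h0 | h9 | h29
  ·
    rcases T 1 7 18 (by decide) (by decide) (by decide) with h1 | h7 | h18
    ·
      rcases T 2 4 18 (by decide) (by decide) (by decide) with h2 | h4 | h18
      ·
        rcases T 12 15 23 (by decide) (by decide) (by decide) with h12 | h15 | h23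
        · exact E 12 2 (by decide) h12 h2
        ·
          rcases T 3 20 26 (by decide) (by decide) (by decide) with h3 | h20 | h26
          · exact E 3 0 (by decide) h3 h0
          ·
            rcases T 4 14 28 (by decide) (by decide) (by decide) with h4 | h14 | h28
            · exact E 4 2 (by decide) h4 h2
            ·
              rcases T 3 17 19 (by decide) (by decide) (by decide) with h3 | h17 | h19
              · exact E 3 0 (by decide) h3 h0
              · exact E 17 14 (by decide) h17 h14
              ·
                rcases T 10 17 24 (by decide) (by decide) (by decide) with h10 | h17 | h24
                ·
                  rcases T 5 6 18 (by decide) (by decide) (by decide) with h5 | h6 | h18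
                  · exact E 5 10 (by decide) h5 h10
                  ·
                    rcases T 13 22 25 (by decide) (by decide) (by decide) with h13 | h22 | h25
                    · exact E 13 0 (by decide) h13 h0
                    · exact E 22 19 (by decide) h22 h19
                    · exact E 25 6 (by decide) h25 h6
                  · exact E 18 0 (by decide) h18 h0
                · exact E 17 14 (by decide) h17 h14
                · exact E 24 2 (by decide) h24 h2
            · exact E 28 20 (by decide) h28 h20
          · exact E 26 15 (by decide) h26 h15
        · exact E 23 0 (by decide) h23 h0
      ·
        rcases T 8 19 22 (by decide) (by decide) (by decide) with h8 | h19 | h22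
        · exact E 8 1 (by decide) h8 h1
        ·
          rcases T 2 12 30 (by decide) (by decide) (by decide) with h2 | h12 | h30
          · exact E 2 4 (by decide) h2 h4
          · exact E 12 19 (by decide) h12 h19
          ·
            rcases T 3 16 27 (by decide) (by decide) (by decide) with h3 | h16 | h27
            · exact E 3 0 (by decide) h3 h0
            · exact E 16 30 (by decide) h16 h30
            ·
              rcases T 11 14 23 (by decide) (by decide) (by decide) with h11 | h14 | h23
              · exact E 11 27 (by decide) h11 h27
              · exact E 14 4 (by decide) h14 h4
              · exact E 23 0 (by decide) h23 h0
        · exact E 22 4 (by decide) h22 h4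
      · exact E 18 0 (by decide) h18 h0
    ·
      rcases T 12 15 23 (by decide) (by decide) (by decide) with h12 | h15 | h23
      ·
        rcases T 2 4 18 (by decide) (by decide) (by decide) with h2 | h4 | h18
        · exact E 2 12 (by decide) h2 h12
        ·
          rcases T 3 17 19 (by decide) (by decide) (by decide) with h3 | h17 | h19
          · exact E 3 0 (by decide) h3 h0
          ·
            rcases T 13 21 24 (by decide) (by decide) (by decide) with h13 | h21 | h24
            · exact E 13 0 (by decide) h13 h0
            · exact E 21 7 (by decide) h21 h7
            · exact E 24 17 (by decide) h24 h17
          · exact E 19 12 (by decide) h19 h12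
        · exact E 18 0 (by decide) h18 h0
      · exact E 15 7 (by decide) h15 h7
      · exact E 23 0 (by decide) h23 h0
    · exact E 18 0 (by decide) h18 h0
  ·
    rcases T 0 13 23 (by decide) (by decide) (by decide) with h0 | h13 | h23
    · exact E 0 9 (by decide) h0 h9
    ·
      rcases T 0 3 18 (by decide) (by decide) (by decide) with h0 | h3 | h18
      · exact E 0 9 (by decide) h0 h9
      ·
        rcases T 8 19 22 (by decide) (by decide) (by decide) with h8 | h19 | h22
        ·
          rcases T 1 7 18 (by decide) (by decide) (by decide) with h1 | h7 | h18
          · exact E 1 8 (by decide) h1 h8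
          ·
            rcases T 10 17 24 (by decide) (by decide) (by decide) with h10 | h17 | h24
            ·
              rcases T 5 6 18 (by decide) (by decide) (by decide) with h5 | h6 | h18
              · exact E 5 10 (by decide) h5 h10
              ·
                rcases T 11 14 23 (by decide) (by decide) (by decide) with h11 | h14 | h23
                · exact E 11 6 (by decide) h11 h6
                ·
                  rcases T 2 4 18 (by decide) (by decide) (by decide) with h2 | h4 | h18
                  ·
                    rcases T 12 15 23 (by decide) (by decide) (by decide) with h12 | h15 | h23
                    · exact E 12 2 (by decide) h12 h2
                    · exact E 15 7 (by decide) h15 h7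
                    · exact E 23 13 (by decide) h23 h13
                  · exact E 4 14 (by decide) h4 h14
                  · exact E 18 3 (by decide) h18 h3
                · exact E 23 13 (by decide) h23 h13
              · exact E 18 3 (by decide) h18 h3
            · exact E 17 3 (by decide) h17 h3
            · exact E 24 13 (by decide) h24 h13
          · exact E 18 3 (by decide) h18 h3
        · exact E 19 3 (by decide) h19 h3
        · exact E 22 13 (by decide) h22 h13
      ·
        rcases T 2 12 30 (by decide) (by decide) (by decide) with h2 | h12 | h30
        · exact E 2 18 (by decide) h2 h18
        ·
          rcases T 3 17 19 (by decide) (by decide) (by decide) with h3 | h17 | h19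
          · exact E 3 18 (by decide) h3 h18
          ·
            rcases T 4 14 28 (by decide) (by decide) (by decide) with h4 | h14 | h28
            · exact E 4 18 (by decide) h4 h18
            · exact E 14 17 (by decide) h14 h17
            · exact E 28 9 (by decide) h28 h9
          · exact E 19 12 (by decide) h19 h12
        · exact E 30 9 (by decide) h30 h9
    ·
      rcases T 2 12 30 (by decide) (by decide) (by decide) with h2 | h12 | h30
      ·
        rcases T 4 14 28 (by decide) (by decide) (by decide) with h4 | h14 | h28
        · exact E 4 2 (by decide) h4 h2
        · exact E 14 23 (by decide) h14 h23
        · exact E 28 9 (by decide) h28 h9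
      · exact E 12 23 (by decide) h12 h23
      · exact E 30 9 (by decide) h30 h9
  ·
    rcases T 0 13 23 (by decide) (by decide) (by decide) with h0 | h13 | h23
    · exact E 0 29 (by decide) h0 h29
    ·
      rcases T 8 19 22 (by decide) (by decide) (by decide) with h8 | h19 | h22
      · exact E 8 29 (by decide) h8 h29
      ·
        rcases T 10 17 24 (by decide) (by decide) (by decide) with h10 | h17 | h24
        · exact E 10 29 (by decide) h10 h29
        · exact E 17 19 (by decide) h17 h19
        · exact E 24 13 (by decide) h24 h13
      · exact E 22 13 (by decide) h22 h13
    ·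
      rcases T 0 3 18 (by decide) (by decide) (by decide) with h0 | h3 | h18
      · exact E 0 29 (by decide) h0 h29
      ·
        rcases T 8 19 22 (by decide) (by decide) (by decide) with h8 | h19 | h22
        · exact E 8 29 (by decide) h8 h29
        · exact E 19 3 (by decide) h19 h3
        ·
          rcases T 2 4 18 (by decide) (by decide) (by decide) with h2 | h4 | h18
          ·
            rcases T 10 17 24 (by decide) (by decide) (by decide) with h10 | h17 | h24
            · exact E 10 29 (by decide) h10 h29
            · exact E 17 3 (by decide) h17 h3
            · exact E 24 2 (by decide) h24 h2
          · exact E 4 22 (by decide) h4 h22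
          · exact E 18 3 (by decide) h18 h3
      ·
        rcases T 2 12 30 (by decide) (by decide) (by decide) with h2 | h12 | h30
        · exact E 2 18 (by decide) h2 h18
        · exact E 12 23 (by decide) h12 h23
        ·
          rcases T 3 16 27 (by decide) (by decide) (by decide) with h3 | h16 | h27
          · exact E 3 18 (by decide) h3 h18
          · exact E 16 30 (by decide) h16 h30
          ·
            rcases T 4 14 28 (by decide) (by decide) (by decide) with h4 | h14 | h28
            · exact E 4 18 (by decide) h4 h18
            · exact E 14 23 (by decide) h14 h23
            ·
              rcases T 3 20 26 (by decide) (by decide) (by decide) with h3 | h20 | h26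
              · exact E 3 18 (by decide) h3 h18
              · exact E 20 28 (by decide) h20 h28
              ·
                rcases T 13 21 24 (by decide) (by decide) (by decide) with h13 | h21 | h24
                · exact E 13 23 (by decide) h13 h23
                · exact E 21 27 (by decide) h21 h27
                ·
                  rcases T 3 17 19 (by decide) (by decide) (by decide) with h3 | h17 | h19
                  · exact E 3 18 (by decide) h3 h18
                  · exact E 17 24 (by decide) h17 h24
                  ·
                    rcases T 13 22 25 (by decide) (by decide) (by decide) with h13 | h22 | h25
                    · exact E 13 23 (by decide) h13 h23
                    · exact E 22 19 (by decide) h22 h19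
                    · exact E 25 26 (by decide) h25 h26

theorem ks_not_colorable : ¬ Is010Colorable ksGraph := by
  rintro ⟨c, hE, hT⟩
  refine ks_refute (fun u => c u = 0) (fun u v h a b => hE u v h ⟨a, b⟩) ?_
  intro u v w h1 h2 h3
  have := hT u v w h1 h2 h3
  omega

/-- There exists a Kochen-Specker graph with exactly 31 vertices: a simple
graph on 31 vertices that is embeddable and not 010-colorable. -/
theorem exists_ks_graph_31 :
    ∃ G : SimpleGraph (Fin 31), Embeddable G ∧ ¬ Is010Colorable G :=
  ⟨ksGraph, ks_embeddable, ks_not_colorable⟩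
end
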